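/- (Part of Lemma 3.13.) The infinite-dimensional sphere S^∞ is ω-homogeneous: for any two countable dense subsets S and T of the unit sphere S^∞ of the real Hilbert space ℓ²(ℕ), there exists a homeomorphism h : S^∞ → S^∞ such that h(S) = T. -/

import Mathlib

/-!
The idea is to build a self-homeomorphism of the sphere of a real Banach space `E` by projecting
radially a map `x ↦ x + φ x` of `E`, where `φ` is positively homogeneous and `1/2`-Lipschitz.
Such a map is a homeomorphism of `E` (a Lipschitz perturbation of the identity) which permutes
the rays from the origin, so it induces a homeomorphism of the unit sphere
(`sphereHomeomorph`). It maps `S` onto `T` if every ray through a point of `S` goes to a ray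
through a point of `T`, and every ray through a point of `T` is reached in this way.

The perturbation `φ` is the pointwise limit of a back-and-forth construction. At each stage, `φ` is
already correct on a finite set `F ⊆ S`. For finite `F` there is a positively homogeneous
`2`-Lipschitz function `β` vanishing on `F` and positive on the other unit vectors (`exists_bump`).
Adding `(β z / β x) • v` to `φ z` leaves the values on `F` alone and changes the value at `x` by
`v`, at the price of increasing the Lipschitz constant by `2‖v‖ / β x`. Density of `T` (forth,
`exists_forth`) and of `S` (back, `exists_back`) allows `v` to be as small as desired, so that the
Lipschitz constants stay below `1/2` and the perturbations converge. Values at treated points never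
change again, so the limit is correct on all of `S` and `T`.
-/

/-- The real Hilbert space `ℓ²(ℕ)` of square-summable real sequences. -/
noncomputable abbrev L2R : Type := lp (fun _ : ℕ => ℝ) 2

/-- The infinite-dimensional sphere `S^∞`, the unit sphere of `ℓ²(ℕ)`. -/
noncomputable abbrev InfSphere : Set L2R := Metric.sphere (0 : L2R) 1

namespace SphereCDH

open Filter Topology

variable {E : Type*} [NormedAddCommGroup E] [NormedSpace ℝ E]

/-! ### Homogeneous Lipschitz perturbations of the identity -/

/-- `φ` is `K`-Lipschitz and positively homogeneous of degree one. The scalar `0` is allowed, so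
that `φ 0 = 0`. -/
structure ConeMap (K : ℝ) (φ : E → E) : Prop where
  lip : ∀ x y, ‖φ x - φ y‖ ≤ K * ‖x - y‖
  homog : ∀ r : ℝ, 0 ≤ r → ∀ x, φ (r • x) = r • φ x

lemma ConeMap.map_zero {K : ℝ} {φ : E → E} (h : ConeMap K φ) : φ 0 = 0 := by
  simpa using h.homog 0 le_rfl 0

lemma ConeMap.mono {K L : ℝ} {φ : E → E} (h : ConeMap K φ) (hKL : K ≤ L) : ConeMap L φ :=
  ⟨fun x y => (h.lip x y).trans (by gcongr), h.homog⟩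

/-- A `1/2`-Lipschitz perturbation of the identity of a Banach space is a homeomorphism. -/
lemma ConeMap.exists_homeomorph [CompleteSpace E] {φ : E → E} (h : ConeMap (1 / 2) φ) :
    ∃ g : E ≃ₜ E, ∀ x, g x = x + φ x := by
  have ha : ApproximatesLinearOn (fun x => x + φ x)
      ((ContinuousLinearEquiv.refl ℝ E : E ≃L[ℝ] E) : E →L[ℝ] E) Set.univ (1 / 2) := by
    intro x _ y _
    have := h.lip x y
    have e : x + φ x - (y + φ y) - (x - y) = φ x - φ y := by abel
    simpa [e] using this
  have hc : Subsingleton E ∨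
      (1 / 2 : NNReal) < ‖((ContinuousLinearEquiv.refl ℝ E).symm : E →L[ℝ] E)‖₊⁻¹ := by
    rcases subsingleton_or_nontrivial E with hE | hE
    · exact Or.inl hE
    · right
      have : ‖((ContinuousLinearEquiv.refl ℝ E).symm : E →L[ℝ] E)‖₊ = 1 := by
        ext
        simp
      rw [this, inv_one]
      exact NNReal.half_lt_self one_ne_zero
  exact ⟨ha.toHomeomorph _ hc, fun x => rfl⟩

/-- The radial projection to the unit sphere of a homeomorphism of `E` that commutes with
multiplication by nonnegative scalars. -/
noncomputable def sphereHomeomorph (g : E ≃ₜ E) (hg : ∀ r : ℝ, 0 ≤ r → ∀ x, g (r • x) = r • g x) :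
    Metric.sphere (0 : E) 1 ≃ₜ Metric.sphere (0 : E) 1 :=
  have g0 : g 0 = 0 := by simpa using hg 0 le_rfl 0
  have hs : ∀ r : ℝ, 0 ≤ r → ∀ x, g.symm (r • x) = r • g.symm x := fun r hr x => by
    rw [Homeomorph.symm_apply_eq, hg r hr, g.apply_symm_apply]
  have ne (x : Metric.sphere (0 : E) 1) : (x : E) ≠ 0 := ne_zero_of_mem_unit_sphere x
  have n1 (x : Metric.sphere (0 : E) 1) : ‖g x‖ ≠ 0 := fun h =>
    ne x (g.injective ((norm_eq_zero.1 h).trans g0.symm))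
  have n2 (x : Metric.sphere (0 : E) 1) : ‖g.symm x‖ ≠ 0 := fun h =>
    ne x (by rw [← g.apply_symm_apply x, norm_eq_zero.1 h, g0])
  { toFun := fun x => ⟨‖g x‖⁻¹ • g x, by simp [norm_smul, n1 x]⟩
    invFun := fun x => ⟨‖g.symm x‖⁻¹ • g.symm x, by simp [norm_smul, n2 x]⟩
    left_inv := fun x => by
      ext1
      simp [hs, norm_smul, smul_smul, n1 x]
    right_inv := fun x => by
      ext1
      simp [hg, norm_smul, smul_smul, n2 x]
    continuous_toFun := by
      have hc : Continuous fun x : Metric.sphere (0 : E) 1 => g x :=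
        g.continuous.comp continuous_subtype_val
      exact ((hc.norm.inv₀ n1).smul hc).subtype_mk _
    continuous_invFun := by
      have hc : Continuous fun x : Metric.sphere (0 : E) 1 => g.symm x :=
        g.symm.continuous.comp continuous_subtype_val
      exact ((hc.norm.inv₀ n2).smul hc).subtype_mk _ }

/-! ### Changing a perturbation at one point -/

/-- The function used is the minimum of `‖z‖` and of `‖z - ‖z‖ • a‖` for `a ∈ F`; it vanishes
exactly on the rays from the origin through `F` (and at the origin). -/
lemma exists_bump (F : Finset E) (hF : ∀ x ∈ F, ‖x‖ = 1) : ∃ β : E → ℝ,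
    (∀ x y, |β x - β y| ≤ 2 * ‖x - y‖) ∧ (∀ r : ℝ, 0 ≤ r → ∀ x, β (r • x) = r * β x) ∧
    (∀ x ∈ F, β x = 0) ∧ (∀ x, 0 ≤ β x) ∧
    ∀ x, ‖x‖ = 1 → x ∉ F → 0 < β x := by
  classical
  induction F using Finset.induction_on with
  | empty =>
    refine ⟨fun x => ‖x‖, fun x y => ?_, fun r hr x => ?_, by simp, fun x => norm_nonneg x,
      fun x hx _ => by simp [hx]⟩
    · linarith [abs_norm_sub_norm_le x y, norm_nonneg (x - y)]
    · simp [norm_smul, abs_of_nonneg hr]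
  | insert a F _ ih =>
    obtain ⟨β, h1, h2, h3, h4, h5⟩ := ih fun x hx => hF x (Finset.mem_insert_of_mem hx)
    have ha : ‖a‖ = 1 := hF a (Finset.mem_insert_self _ _)
    refine ⟨fun x => min (β x) ‖x - ‖x‖ • a‖, fun x y => ?_, fun r hr x => ?_,
      fun x hx => ?_, fun x => le_min (h4 x) (norm_nonneg _), fun x hx hxF => ?_⟩
    · refine (abs_min_sub_min_le_max _ _ _ _).trans (max_le (h1 x y) ?_)
      refine (abs_norm_sub_norm_le _ _).trans ?_
      have e : x - ‖x‖ • a - (y - ‖y‖ • a) = (x - y) - (‖x‖ - ‖y‖) • a := by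
        rw [sub_smul]; abel
      rw [e]
      refine (norm_sub_le _ _).trans ?_
      rw [norm_smul, ha, Real.norm_eq_abs]
      linarith [abs_norm_sub_norm_le x y]
    · have e : r • x - ‖r • x‖ • a = r • (x - ‖x‖ • a) := by
        rw [norm_smul, Real.norm_of_nonneg hr, smul_sub, smul_smul]
      simp only [e]
      rw [h2 r hr, norm_smul, Real.norm_of_nonneg hr]
      exact (mul_min_of_nonneg _ _ hr).symm
    · rcases Finset.mem_insert.1 hx with rfl | hx
      · simp [ha, h4]
      · simp [h3 x hx]
    · rw [Finset.mem_insert, not_or] at hxF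
      refine lt_min (h5 x hx hxF.2) (norm_pos_iff.2 ?_)
      rw [hx, one_smul]
      exact sub_ne_zero.2 hxF.1

/-- Correcting the value of `φ` at `x` by `v`, using a bump function `β`. -/
lemma ConeMap.add_bump {K ε : ℝ} {φ : E → E} (h : ConeMap K φ) {β : E → ℝ}
    (h1 : ∀ x y, |β x - β y| ≤ 2 * ‖x - y‖) (h2 : ∀ r : ℝ, 0 ≤ r → ∀ x, β (r • x) = r * β x)
    {x v : E} (hx : 0 < β x) (hv : 2 * ‖v‖ ≤ ε * β x) :
    ConeMap (K + ε) (fun z => φ z + (β z / β x) • v) ∧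
      ∀ z, ‖(φ z + (β z / β x) • v) - φ z‖ ≤ ε * ‖z‖ := by
  have key : ∀ y z, ‖(β y / β x) • v - (β z / β x) • v‖ ≤ ε * ‖y - z‖ := fun y z => by
    rw [← sub_smul, norm_smul, ← sub_div, Real.norm_eq_abs, abs_div, abs_of_pos hx,
      div_mul_eq_mul_div, div_le_iff₀ hx]
    calc |β y - β z| * ‖v‖ ≤ 2 * ‖y - z‖ * ‖v‖ := by gcongr; exact h1 y z
      _ = 2 * ‖v‖ * ‖y - z‖ := by ring
      _ ≤ ε * β x * ‖y - z‖ := by gcongr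
      _ = ε * ‖y - z‖ * β x := by ring
  refine ⟨⟨fun y z => ?_, fun r hr z => ?_⟩, fun z => ?_⟩
  · have e : φ y + (β y / β x) • v - (φ z + (β z / β x) • v)
        = (φ y - φ z) + ((β y / β x) • v - (β z / β x) • v) := by abel
    rw [e, add_mul]
    exact (norm_add_le _ _).trans (add_le_add (h.lip y z) (key y z))
  · simp only [h.homog r hr, h2 r hr, smul_add, smul_smul, mul_div_assoc]
  · have b0 : β 0 = 0 := by simpa using h2 0 le_rfl 0
    simpa [b0] using key z 0

/-! ### The back-and-forth construction -/

/-- `A` is a dense set of unit vectors (dense in the unit sphere). -/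
structure SphereDense (A : Set E) : Prop where
  norm_eq : ∀ x ∈ A, ‖x‖ = 1
  dense : ∀ y : E, ‖y‖ = 1 → ∀ δ > 0, ∃ x ∈ A, ‖x - y‖ < δ

/-- A stage of the construction: a homogeneous `K`-Lipschitz `φ` and a finite set `F ⊆ S` such that
`x + φ x` lies on a ray through `T` for each `x ∈ F`. -/
structure Stage (S T : Set E) (K : ℝ) (φ : E → E) (F : Finset E) : Prop where
  cone : ConeMap K φ
  sub : ∀ x ∈ F, x ∈ S
  ray : ∀ x ∈ F, ∃ t ∈ T, ∃ c : ℝ, 0 < c ∧ x + φ x = c • t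

/-- The pair `(φ', F')` extends `(φ, F)`, and `φ'` is `ε`-close to `φ` on the unit sphere. -/
structure Extends (ε : ℝ) (φ : E → E) (F : Finset E) (φ' : E → E) (F' : Finset E) : Prop where
  sub : F ⊆ F'
  eq : ∀ x ∈ F, φ' x = φ x
  close : ∀ z, ‖φ' z - φ z‖ ≤ ε * ‖z‖

lemma Extends.refl {ε : ℝ} (hε : 0 ≤ ε) (φ : E → E) (F : Finset E) : Extends ε φ F φ F :=
  ⟨subset_rfl, fun _ _ => rfl, fun z => by simpa using mul_nonneg hε (norm_nonneg z)⟩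

lemma Extends.trans {ε ε' : ℝ} {φ φ' φ'' : E → E} {F F' F'' : Finset E}
    (h : Extends ε φ F φ' F') (h' : Extends ε' φ' F' φ'' F'') :
    Extends (ε + ε') φ F φ'' F'' := by
  refine ⟨h.sub.trans h'.sub, fun x hx => (h'.eq x (h.sub hx)).trans (h.eq x hx), fun z => ?_⟩
  have e : φ'' z - φ z = (φ' z - φ z) + (φ'' z - φ' z) := by abel
  rw [e, add_mul]
  exact (norm_add_le _ _).trans (add_le_add (h.close z) (h'.close z))

/-- Both steps of the construction rest on this: if a unit vector `x ∈ S` misses a ray of `T` by a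
vector `v` small in comparison with the bump function at `x`, then `x` can be added to `F`. -/
lemma Stage.insert_point {S T : Set E} {K ε : ℝ} {φ : E → E} {F : Finset E}
    (h : Stage S T K φ F) {β : E → ℝ}
    (h1 : ∀ x y, |β x - β y| ≤ 2 * ‖x - y‖) (h2 : ∀ r : ℝ, 0 ≤ r → ∀ x, β (r • x) = r * β x)
    (h3 : ∀ x ∈ F, β x = 0) {x t : E} {c : ℝ} (hxS : x ∈ S) (ht : t ∈ T) (hc : 0 < c)
    (hx : 0 < β x) (hv : 2 * ‖c • t - (x + φ x)‖ ≤ ε * β x) :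
    ∃ φ' F', Stage S T (K + ε) φ' F' ∧ Extends ε φ F φ' F' ∧ x ∈ F' ∧ x + φ' x = c • t := by
  classical
  obtain ⟨hcone, hclose⟩ := h.cone.add_bump h1 h2 hx hv
  have heq : ∀ y ∈ F, φ y + (β y / β x) • (c • t - (x + φ x)) = φ y := fun y hy => by
    simp [h3 y hy]
  have hval : x + (φ x + (β x / β x) • (c • t - (x + φ x))) = c • t := by
    rw [div_self hx.ne', one_smul]; abel
  refine ⟨_, insert x F, ⟨hcone, ?_, ?_⟩, ⟨Finset.subset_insert _ _, heq, hclose⟩,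
    Finset.mem_insert_self _ _, hval⟩
  · intro y hy
    rcases Finset.mem_insert.1 hy with rfl | hy
    exacts [hxS, h.sub y hy]
  · intro y hy
    rcases Finset.mem_insert.1 hy with rfl | hy
    · exact ⟨t, ht, c, hc, hval⟩
    · simpa only [heq y hy] using h.ray y hy

/-- Forth: a given `s ∈ S` can be treated. -/
lemma exists_forth {S T : Set E} (hS : SphereDense S) (hT : SphereDense T) {K ε : ℝ}
    (hK : K ≤ 1 / 2) (hε : 0 < ε) {φ : E → E} {F : Finset E} (h : Stage S T K φ F) {s : E}
    (hs : s ∈ S) :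
    ∃ φ' F', Stage S T (K + ε) φ' F' ∧ Extends ε φ F φ' F' ∧ s ∈ F' := by
  by_cases hsF : s ∈ F
  · exact ⟨φ, F, ⟨h.cone.mono (by linarith), h.sub, h.ray⟩, Extends.refl hε.le _ _, hsF⟩
  have hs1 := hS.norm_eq s hs
  obtain ⟨β, h1, h2, h3, -, h5⟩ :=
    exists_bump F fun x hx => hS.norm_eq x (h.sub x hx)
  have hβ := h5 s hs1 hsF
  have hne : 0 < ‖s + φ s‖ := by
    have := (h.cone.mono hK).lip s 0
    rw [h.cone.map_zero, sub_zero, sub_zero, hs1] at this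
    have h' : ‖s‖ ≤ ‖s + φ s‖ + ‖φ s‖ := by simpa using norm_sub_le (s + φ s) (φ s)
    linarith
  set c := ‖s + φ s‖ with hc
  obtain ⟨t, ht, hts⟩ := hT.dense (c⁻¹ • (s + φ s))
    (by rw [norm_smul, ← hc, norm_inv, Real.norm_of_nonneg hne.le, inv_mul_cancel₀ hne.ne'])
    (ε * β s / (2 * c)) (by positivity)
  have hv : 2 * ‖c • t - (s + φ s)‖ ≤ ε * β s := by
    have e : c • t - (s + φ s) = c • (t - c⁻¹ • (s + φ s)) := by
      rw [smul_sub, smul_smul, mul_inv_cancel₀ hne.ne', one_smul]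
    rw [e, norm_smul, Real.norm_of_nonneg hne.le]
    rw [lt_div_iff₀ (by positivity)] at hts
    linarith
  obtain ⟨φ', F', a, b, d, -⟩ := h.insert_point h1 h2 h3 hs ht hne hβ hv
  exact ⟨φ', F', a, b, d⟩

/-- Back: the ray through a given `t ∈ T` can be reached. -/
lemma exists_back [CompleteSpace E] {S T : Set E} (hS : SphereDense S) (hT : SphereDense T)
    {K ε : ℝ} (hK : K ≤ 1 / 2) (hε : 0 < ε) {φ : E → E} {F : Finset E} (h : Stage S T K φ F)
    {t : E} (ht : t ∈ T) :
    ∃ φ' F', Stage S T (K + ε) φ' F' ∧ Extends ε φ F φ' F' ∧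
      ∃ x ∈ F', ∃ c : ℝ, 0 < c ∧ x + φ' x = c • t := by
  have hcone := h.cone.mono hK
  obtain ⟨g, hg⟩ := hcone.exists_homeomorph
  -- The unit vector `y` satisfies `y + φ y = c • t`; a point of `S` near it will take its place.
  obtain ⟨y, hy1, c, hc, hy⟩ : ∃ y : E, ‖y‖ = 1 ∧ ∃ c : ℝ, 0 < c ∧ y + φ y = c • t := by
    have hw : g.symm t + φ (g.symm t) = t := by rw [← hg, g.apply_symm_apply]
    have hne : g.symm t ≠ 0 := fun h0 => by
      rw [h0, hcone.map_zero, add_zero] at hw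
      have := hT.norm_eq t ht
      simp [← hw] at this
    have hpos : 0 < ‖g.symm t‖ := norm_pos_iff.2 hne
    refine ⟨‖g.symm t‖⁻¹ • g.symm t, by simp [norm_smul, hpos.ne'], ‖g.symm t‖⁻¹,
      inv_pos.2 hpos, ?_⟩
    rw [hcone.homog _ (inv_pos.2 hpos).le, ← smul_add, hw]
  by_cases hyF : y ∈ F
  · exact ⟨φ, F, ⟨h.cone.mono (by linarith), h.sub, h.ray⟩, Extends.refl hε.le _ _, y, hyF, c, hc,
      hy⟩
  obtain ⟨β, h1, h2, h3, -, h5⟩ :=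
    exists_bump F fun x hx => hS.norm_eq x (h.sub x hx)
  have hβ := h5 y hy1 hyF
  obtain ⟨x, hxS, hxy⟩ := hS.dense y hy1 (min (β y / 4) (ε * β y / 8)) (by positivity)
  have hx1 := hxy.trans_le (min_le_left _ _)
  have hx2 := hxy.trans_le (min_le_right _ _)
  have hβx : β y / 2 ≤ β x := by
    have := (abs_le.1 (h1 x y)).1
    linarith
  have hv : 2 * ‖c • t - (x + φ x)‖ ≤ ε * β x := by
    have e : c • t - (x + φ x) = -((x - y) + (φ x - φ y)) := by rw [← hy]; abel
    have := norm_add_le (x - y) (φ x - φ y)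
    have := hcone.lip x y
    have : ε * (β y / 2) ≤ ε * β x := by gcongr
    rw [e, norm_neg]
    linarith [norm_nonneg (x - y)]
  obtain ⟨φ', F', a, b, d, e⟩ :=
    h.insert_point h1 h2 h3 hxS ht hc (by linarith) hv
  exact ⟨φ', F', a, b, x, d, c, hc, e⟩

/-- The limit of the back-and-forth construction. -/
lemma exists_coneMap [CompleteSpace E] {s t : ℕ → E} (hS : SphereDense (Set.range s))
    (hT : SphereDense (Set.range t)) :
    ∃ φ : E → E, ConeMap (1 / 2) φ ∧
      (∀ n, ∃ m, ∃ c : ℝ, 0 < c ∧ s n + φ (s n) = c • t m) ∧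
      ∀ n, ∃ m, ∃ c : ℝ, 0 < c ∧ s m + φ (s m) = c • t n := by
  -- Stage `n` has Lipschitz constant `1/2 - (1/2)^(n+1)`, which leaves room for two steps
  -- with `ε = (1/2)^(n+3)`.
  let K : ℕ → ℝ := fun n => 1 / 2 - (1 / 2) ^ (n + 1)
  let P : ℕ → Type _ := fun n =>
    {p : (E → E) × Finset E // Stage (Set.range s) (Set.range t) (K n) p.1 p.2}
  have hK : ∀ n, K n + (1 / 2) ^ (n + 3) ≤ 1 / 2 := fun n => by
    have : (0 : ℝ) < (1 / 2) ^ n := by positivity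
    simp only [K, pow_add]; linarith
  have step : ∀ n (p : P n), ∃ q : P (n + 1),
      Extends ((1 / 2) ^ (n + 3) + (1 / 2) ^ (n + 3)) p.1.1 p.1.2 q.1.1 q.1.2 ∧ s n ∈ q.1.2 ∧
      ∃ x ∈ q.1.2, ∃ c : ℝ, 0 < c ∧ x + q.1.1 x = c • t n := by
    rintro n ⟨⟨φ, F⟩, h⟩
    have hε : (0 : ℝ) < (1 / 2) ^ (n + 3) := by positivity
    obtain ⟨φ₁, F₁, a₁, b₁, d₁⟩ :=
      exists_forth hS hT (by linarith [hK n]) hε h (Set.mem_range_self n)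
    obtain ⟨φ₂, F₂, a₂, b₂, d₂⟩ := exists_back hS hT (hK n) hε a₁ (Set.mem_range_self n)
    have e : K n + (1 / 2) ^ (n + 3) + (1 / 2) ^ (n + 3) = K (n + 1) := by
      simp only [K, pow_add]; ring
    exact ⟨⟨(φ₂, F₂), e ▸ a₂⟩, b₁.trans b₂, b₂.sub d₁, d₂⟩
  choose next hnext hs ht using step
  have p0 : Stage (Set.range s) (Set.range t) (K 0) (fun _ => (0 : E)) ∅ :=
    ⟨⟨by simp [K], by simp⟩, by simp, by simp⟩
  let p : ∀ n, P n := fun n => Nat.rec ⟨(fun _ => 0, ∅), p0⟩ (fun n q => next n q) n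
  let f : ℕ → E → E := fun n => (p n).1.1
  let F : ℕ → Finset E := fun n => (p n).1.2
  have hst : ∀ n, Stage (Set.range s) (Set.range t) (K n) (f n) (F n) := fun n => (p n).2
  have hext : ∀ n, Extends ((1 / 2) ^ (n + 3) + (1 / 2) ^ (n + 3)) (f n) (F n) (f (n + 1))
    (F (n + 1)) := fun n => hnext n (p n)
  have hlim : ∀ z, ∃ w, Tendsto (fun n => f n z) atTop (𝓝 w) := fun z => by
    refine cauchySeq_tendsto_of_complete
      (cauchySeq_of_le_geometric (1 / 2) ‖z‖ (by norm_num) fun n => ?_)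
    rw [dist_comm, dist_eq_norm]
    refine ((hext n).close z).trans ?_
    have : (0 : ℝ) ≤ (1 / 2) ^ n * ‖z‖ := by positivity
    simp only [pow_add]
    linarith
  choose φ hφ using hlim
  have hmono : ∀ n k, F n ⊆ F (n + k) ∧ ∀ x ∈ F n, f (n + k) x = f n x := by
    intro n k
    induction k with
    | zero => exact ⟨subset_rfl, fun _ _ => rfl⟩
    | succ k ih =>
      exact ⟨ih.1.trans (hext (n + k)).sub,
        fun x hx => ((hext (n + k)).eq x (ih.1 hx)).trans (ih.2 x hx)⟩
  have hstable : ∀ n, ∀ x ∈ F n, φ x = f n x := fun n x hx => by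
    refine tendsto_nhds_unique (hφ x) (tendsto_const_nhds.congr' ?_)
    filter_upwards [eventually_ge_atTop n] with m hm
    obtain ⟨k, rfl⟩ := Nat.exists_eq_add_of_le hm
    exact ((hmono n k).2 x hx).symm
  have hcone : ∀ n, ConeMap (1 / 2) (f n) := fun n =>
    (hst n).cone.mono (sub_le_self _ (by positivity))
  refine ⟨φ, ⟨fun x y => ?_, fun r hr x => ?_⟩, fun n => ?_, fun n => ?_⟩
  · exact le_of_tendsto' ((hφ x).sub (hφ y)).norm fun n => (hcone n).lip x y
  · refine tendsto_nhds_unique (hφ (r • x)) (((hφ x).const_smul r).congr fun n => ?_)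
    exact ((hcone n).homog r hr x).symm
  · have hmem : s n ∈ F (n + 1) := hs n (p n)
    obtain ⟨_, ⟨m, rfl⟩, c, hc, e⟩ := (hst (n + 1)).ray _ hmem
    exact ⟨m, c, hc, by rw [hstable (n + 1) _ hmem]; exact e⟩
  · obtain ⟨x, hx, c, hc, e⟩ := ht n (p n)
    obtain ⟨m, rfl⟩ := (hst (n + 1)).sub x hx
    exact ⟨m, c, hc, by rw [hstable (n + 1) _ hx]; exact e⟩

/-! ### Countable dense subsets of the sphere -/

lemma exists_enum {A : Set (Metric.sphere (0 : E) 1)} (hc : A.Countable) (hd : Dense A)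
    (hne : A.Nonempty) :
    ∃ a : ℕ → Metric.sphere (0 : E) 1, A = Set.range a ∧
      SphereDense (Set.range fun n => (a n : E)) := by
  obtain ⟨a, rfl⟩ := hc.exists_eq_range hne
  refine ⟨a, rfl, ?_, fun y hy δ hδ => ?_⟩
  · rintro _ ⟨n, rfl⟩
    exact norm_eq_of_mem_sphere _
  · obtain ⟨_, ⟨n, rfl⟩, hn⟩ := hd.exists_dist_lt ⟨y, by simpa using hy⟩ hδ
    refine ⟨_, ⟨n, rfl⟩, ?_⟩
    rwa [dist_comm, Subtype.dist_eq, dist_eq_norm] at hn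

theorem exists_homeomorph [CompleteSpace E] (S T : Set (Metric.sphere (0 : E) 1))
    (hSc : S.Countable) (hSd : Dense S) (hTc : T.Countable) (hTd : Dense T) :
    ∃ h : Metric.sphere (0 : E) 1 ≃ₜ Metric.sphere (0 : E) 1, h '' S = T := by
  rcases isEmpty_or_nonempty (Metric.sphere (0 : E) 1) with hE | hE
  · exact ⟨Homeomorph.refl _, Set.ext fun x => hE.elim x⟩
  obtain ⟨s, rfl, hs⟩ := exists_enum hSc hSd hSd.nonempty
  obtain ⟨t, rfl, ht⟩ := exists_enum hTc hTd hTd.nonempty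
  obtain ⟨φ, hφ, hforth, hback⟩ := exists_coneMap hs ht
  obtain ⟨g, hg⟩ := hφ.exists_homeomorph
  have hgh : ∀ r : ℝ, 0 ≤ r → ∀ x, g (r • x) = r • g x := fun r hr x => by
    simp only [hg, hφ.homog r hr, smul_add]
  have key : ∀ x y : Metric.sphere (0 : E) 1, ∀ c : ℝ, 0 < c → (x : E) + φ x = c • (y : E) →
      sphereHomeomorph g hgh x = y := fun x y c hc e => by
    ext1
    change ‖g x‖⁻¹ • g x = (y : E)
    rw [hg, e, norm_smul, norm_eq_of_mem_sphere y, mul_one, Real.norm_of_nonneg hc.le, smul_smul,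
      inv_mul_cancel₀ hc.ne', one_smul]
  refine ⟨sphereHomeomorph g hgh, Set.Subset.antisymm ?_ ?_⟩
  · rintro _ ⟨_, ⟨n, rfl⟩, rfl⟩
    obtain ⟨m, c, hc, e⟩ := hforth n
    exact ⟨m, (key _ _ c hc e).symm⟩
  · rintro _ ⟨n, rfl⟩
    obtain ⟨m, c, hc, e⟩ := hback n
    exact ⟨s m, ⟨m, rfl⟩, key _ _ c hc e⟩

end SphereCDH

/-- The infinite-dimensional sphere `S^∞` is ω-homogeneous: for any two countable dense
subsets `S` and `T` of `S^∞` there is a self-homeomorphism `h` with `h '' S = T`. -/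
theorem infSphere_omega_homogeneous
    (S T : Set InfSphere) (hScount : S.Countable) (hSdense : Dense S)
    (hTcount : T.Countable) (hTdense : Dense T) :
    ∃ h : InfSphere ≃ₜ InfSphere, h '' S = T :=
  SphereCDH.exists_homeomorph S T hScount hSdense hTcount hTdense
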